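/- Let i denote the imaginary unit. Then (i/6) · ∫_{-∞}^{∞} (96iξ) / ((ξ − i)³ (1 + ξ²)⁴) dξ = (7/8)π. -/

import Mathlib

open Complex MeasureTheory Filter Topology

theorem aux_ne (x : ℝ) : (x : ℂ) - I ≠ 0 := by
  intro h
  have := congrArg Complex.im h
  simp at this

theorem aux_ne' (x : ℝ) : (x : ℂ) + I ≠ 0 := by
  intro h
  have := congrArg Complex.im h
  simp at this

theorem aux_fac (x : ℂ) : 1 + x ^ 2 = (x - I) * (x + I) := by
  linear_combination I_sq

noncomputable def auxG (x : ℂ) : ℂ :=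
  ((1) ) * ((x - I)⁻¹) ^ 6
      + ((0) + (6/5) * I) * ((x - I)⁻¹) ^ 5
      + ((-3/4) ) * ((x - I)⁻¹) ^ 4
      + ((0) ) * ((x - I)⁻¹) ^ 3
      + ((-15/16) ) * ((x - I)⁻¹) ^ 2
      + ((0) + (-21/8) * I) * ((x - I)⁻¹) ^ 1
      + ((0) + (1/4) * I) * ((x + I)⁻¹) ^ 3
      + ((15/16) ) * ((x + I)⁻¹) ^ 2
      + ((0) + (-21/8) * I) * ((x + I)⁻¹) ^ 1

theorem aux_tend {l : Filter ℝ} (h : Tendsto (fun x : ℝ => (x : ℂ)) l (Bornology.cobounded ℂ)) :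
    Tendsto (fun x : ℝ => auxG (x : ℂ)) l (𝓝 0) := by
  have h1 : Tendsto (fun x : ℝ => ((x : ℂ) - I)⁻¹) l (𝓝 0) :=
    tendsto_inv₀_cobounded.comp ((tendsto_sub_const_cobounded I).comp h)
  have h2 : Tendsto (fun x : ℝ => ((x : ℂ) + I)⁻¹) l (𝓝 0) :=
    tendsto_inv₀_cobounded.comp ((tendsto_add_const_cobounded I).comp h)
  have key : ∀ (c : ℂ) (n : ℕ) (f : ℝ → ℂ), Tendsto f l (𝓝 0) →
      Tendsto (fun x => c * f x ^ (n + 1)) l (𝓝 0) := by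
    intro c n f hf
    simpa using (hf.pow (n + 1)).const_mul c
  unfold auxG
  have := (((((((((key ((1) ) 5 _ h1).add
    (key ((0) + (6/5) * I) 4 _ h1)).add
    (key ((-3/4) ) 3 _ h1)).add
    (key ((0) ) 2 _ h1)).add
    (key ((-15/16) ) 1 _ h1)).add
    (key ((0) + (-21/8) * I) 0 _ h1)).add
    (key ((0) + (1/4) * I) 2 _ h2)).add
    (key ((15/16) ) 1 _ h2)).add
    (key ((0) + (-21/8) * I) 0 _ h2))
  simpa only [add_zero] using this

theorem aux_deriv (x : ℝ) : HasDerivAt (fun x : ℝ => auxG (x : ℂ) - (21 / 4) * I * (Real.arctan x : ℂ))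
    ((96 * I * (x : ℂ)) / (((x : ℂ) - I) ^ 3 * (1 + (x : ℂ) ^ 2) ^ 4)) x := by
  have hm := aux_ne x
  have hp := aux_ne' x
  have h0 : HasDerivAt (fun x : ℝ => (x : ℂ)) 1 x := Complex.ofRealCLM.hasDerivAt
  have h1 : HasDerivAt (fun x : ℝ => ((x : ℂ) - I)⁻¹) (-1 / ((x : ℂ) - I) ^ 2) x := (h0.sub_const I).inv hm
  have h2 : HasDerivAt (fun x : ℝ => ((x : ℂ) + I)⁻¹) (-1 / ((x : ℂ) + I) ^ 2) x := (h0.add_const I).inv hp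
  have key : ∀ (c : ℂ) (n : ℕ) (f : ℝ → ℂ) (f' : ℂ), HasDerivAt f f' x →
      HasDerivAt (fun x => c * f x ^ (n + 1)) (c * ((n + 1 : ℕ) * f x ^ n * f')) x := by
    intro c n f f' hf
    exact (hf.pow (n + 1)).const_mul c
  have h3 := (Real.hasDerivAt_arctan x).ofReal_comp.const_mul ((21 / 4) * I)
  unfold auxG
  have := (((((((((key ((1) ) 5 _ _ h1).add
    (key ((0) + (6/5) * I) 4 _ _ h1)).add
    (key ((-3/4) ) 3 _ _ h1)).add
    (key ((0) ) 2 _ _ h1)).add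
    (key ((-15/16) ) 1 _ _ h1)).add
    (key ((0) + (-21/8) * I) 0 _ _ h1)).add
    (key ((0) + (1/4) * I) 2 _ _ h2)).add
    (key ((15/16) ) 1 _ _ h2)).add
    (key ((0) + (-21/8) * I) 0 _ _ h2)).sub h3
  refine this.congr_deriv ?_
  clear this h0 h1 h2 h3 key
  push_cast
  rw [aux_fac]
  generalize (x : ℂ) = z at *
  obtain ⟨t, rfl⟩ : ∃ t, z = t + I := ⟨z - I, by ring⟩
  have e : t + I + I = t + 2 * I := by ring
  simp only [add_sub_cancel_right, e] at hm hp ⊢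
  have i2 := I_sq
  have i3 : I ^ 3 = -I := by linear_combination I * I_sq
  have i4 : I ^ 4 = 1 := I_pow_four
  have i5 : I ^ 5 = I := by linear_combination I * i4
  have i6 : I ^ 6 = -1 := by linear_combination I ^ 2 * i4 + i2
  have hp2 : t + I * 2 ≠ 0 := by rwa [mul_comm] at hp
  field_simp
  ring_nf
  simp only [i2, i3, i4, i5, i6]
  ring

theorem aux_int : Integrable (fun x : ℝ =>
    (96 * I * (x : ℂ)) / (((x : ℂ) - I) ^ 3 * (1 + (x : ℂ) ^ 2) ^ 4)) := by
  refine (integrable_inv_one_add_sq.const_mul 96).mono' ?_ (ae_of_all _ fun x => ?_)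
  · refine Continuous.aestronglyMeasurable ?_
    refine Continuous.div (by fun_prop) (by fun_prop) fun x => ?_
    rw [aux_fac]
    have := aux_ne x
    have := aux_ne' x
    positivity
  · have h1 : 1 ≤ ‖(x : ℂ) - I‖ := by
      have := Complex.abs_im_le_norm ((x : ℂ) - I)
      simpa using this
    have h2 : ‖1 + (x : ℂ) ^ 2‖ = 1 + x ^ 2 := by
      have : (1 + (x : ℂ) ^ 2) = ((1 + x ^ 2 : ℝ) : ℂ) := by push_cast; rfl
      rw [this, Complex.norm_real, Real.norm_of_nonneg (by positivity)]
    rw [norm_div, norm_mul, norm_mul, norm_mul, norm_pow, norm_pow, h2]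
    simp only [Complex.norm_I, Complex.norm_real, Real.norm_eq_abs, Complex.norm_ofNat, mul_one]
    have h3 : |x| ≤ 1 + x ^ 2 := by
      rw [← sq_abs x]; nlinarith [sq_nonneg (|x| - 1), abs_nonneg x]
    have h4 : (1:ℝ) ≤ 1 + x ^ 2 := by nlinarith [sq_nonneg x]
    have h5 : (1 + x ^ 2) ^ 2 ≤ ‖(x : ℂ) - I‖ ^ 3 * (1 + x ^ 2) ^ 4 := by
      calc (1 + x ^ 2) ^ 2 ≤ (1 + x ^ 2) ^ 4 := pow_le_pow_right₀ h4 (by norm_num)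
        _ = 1 * (1 + x ^ 2) ^ 4 := (one_mul _).symm
        _ ≤ _ := by gcongr; exact one_le_pow₀ h1
    calc 96 * |x| / (‖(x : ℂ) - I‖ ^ 3 * (1 + x ^ 2) ^ 4)
        ≤ 96 * (1 + x ^ 2) / (1 + x ^ 2) ^ 2 := by gcongr
      _ = 96 * (1 + x ^ 2)⁻¹ := by field_simp

theorem stmt_5 :
    (I / 6) * ∫ ξ : ℝ,
        (96 * I * (ξ : ℂ)) / (((ξ : ℂ) - I) ^ 3 * (1 + (ξ : ℂ) ^ 2) ^ 4)
      = (7 / 8) * (Real.pi : ℂ) := by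
  have hb : Tendsto (fun x : ℝ => (x : ℂ)) (Bornology.cobounded ℝ) (Bornology.cobounded ℂ) := by
    rw [← tendsto_norm_atTop_iff_cobounded]
    simp only [Complex.norm_real]
    exact tendsto_norm_cobounded_atTop
  have ht := hb.mono_left (show atTop ≤ Bornology.cobounded ℝ from by simp)
  have hbt := hb.mono_left (show atBot ≤ Bornology.cobounded ℝ from by simp)
  have at1 := ((Complex.continuous_ofReal.tendsto _).comp
    (Real.tendsto_arctan_atTop.mono_right nhdsWithin_le_nhds)).const_mul ((21 / 4) * I)
  have at2 := ((Complex.continuous_ofReal.tendsto _).comp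
    (Real.tendsto_arctan_atBot.mono_right nhdsWithin_le_nhds)).const_mul ((21 / 4) * I)
  rw [integral_of_hasDerivAt_of_tendsto aux_deriv aux_int
    ((aux_tend hbt).sub at2) ((aux_tend ht).sub at1)]
  push_cast
  linear_combination (-7 / 8 * (Real.pi : ℂ)) * I_sq
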